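/- arXiv:2603.01201 — 7 statements merged into one kernel-verified Lean document; each statement's English description precedes it below -/
import Mathlib

section
/- For every LTLf formula φ in negation normal form over a set of atoms P, every interpretation w ∈ 2^P, and every finite, possibly empty trace τ ∈ (2^P)^*, the trace w·τ (τ with w prepended) satisfies φ if and only if τ satisfies prog(φ, w). -/
inductive LTLf (P : Type) : Type where
  | tt : LTLf P
  | ff : LTLf P
  | atom : P → LTLf P
  | natom : P → LTLf P
  | conj : LTLf P → LTLf P → LTLf P
  | disj : LTLf P → LTLf P → LTLf P
  | next : LTLf P → LTLf P
  | wnext : LTLf P → LTLf P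
  | untl : LTLf P → LTLf P → LTLf P
  | release : LTLf P → LTLf P → LTLf P
  deriving DecidableEq

def LTLf.Sat {P : Type} : List (Set P) → LTLf P → Prop
  | _, .tt => True
  | _, .ff => False
  | [], .atom _ => False
  | w :: _, .atom p => p ∈ w
  | [], .natom _ => False
  | w :: _, .natom p => p ∉ w
  | τ, .conj φ₁ φ₂ => LTLf.Sat τ φ₁ ∧ LTLf.Sat τ φ₂
  | τ, .disj φ₁ φ₂ => LTLf.Sat τ φ₁ ∨ LTLf.Sat τ φ₂
  | [], .next _ => False
  | _ :: τ, .next φ => τ ≠ [] ∧ LTLf.Sat τ φ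
  | [], .wnext _ => True
  | _ :: τ, .wnext φ => τ = [] ∨ LTLf.Sat τ φ
  | [], .untl _ _ => False
  | w :: τ, .untl φ₁ φ₂ =>
      LTLf.Sat (w :: τ) φ₂ ∨ (LTLf.Sat (w :: τ) φ₁ ∧ LTLf.Sat τ (.untl φ₁ φ₂))
  | [], .release _ _ => True
  | w :: τ, .release φ₁ φ₂ =>
      LTLf.Sat (w :: τ) φ₂ ∧ (LTLf.Sat (w :: τ) φ₁ ∨ LTLf.Sat τ (.release φ₁ φ₂))
termination_by τ φ => (τ.length, sizeOf φ)

open Classical in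
noncomputable def LTLf.prog {P : Type} : LTLf P → Set P → LTLf P
  | .tt, _ => .tt
  | .ff, _ => .ff
  | .atom p, w => if p ∈ w then .tt else .ff
  | .natom p, w => if p ∈ w then .ff else .tt
  | .conj φ₁ φ₂, w => .conj (φ₁.prog w) (φ₂.prog w)
  | .disj φ₁ φ₂, w => .disj (φ₁.prog w) (φ₂.prog w)
  | .next φ, _ => .conj φ (.untl .tt .tt)
  | .wnext φ, _ => .disj φ (.release .ff .ff)
  | .untl φ₁ φ₂, w =>
      .disj (φ₂.prog w) (.conj (φ₁.prog w) (.conj (.untl φ₁ φ₂) (.untl .tt .tt)))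
  | .release φ₁ φ₂, w =>
      .conj (φ₂.prog w) (.disj (φ₁.prog w) (.disj (.release φ₁ φ₂) (.release .ff .ff)))

noncomputable def LTLf.progTrace {P : Type} (φ : LTLf P) (h : List (Set P)) : LTLf P :=
  h.foldl LTLf.prog φ

theorem LTLf.sat_tt_untl_tt {P : Type} (τ : List (Set P)) :
    LTLf.Sat τ (.untl .tt .tt) ↔ τ ≠ [] := by
  cases τ <;> simp [LTLf.Sat]

theorem LTLf.sat_ff_release_ff {P : Type} (τ : List (Set P)) :
    LTLf.Sat τ (.release .ff .ff) ↔ τ = [] := by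
  cases τ <;> simp [LTLf.Sat]

theorem LTLf.ne_nil_of_sat_untl {P : Type} {φ₁ φ₂ : LTLf P} {τ : List (Set P)}
    (h : LTLf.Sat τ (.untl φ₁ φ₂)) : τ ≠ [] := by
  rintro rfl
  simp [LTLf.Sat] at h

theorem LTLf.sat_release_of_eq_nil {P : Type} {φ₁ φ₂ : LTLf P} {τ : List (Set P)}
    (h : τ = []) : LTLf.Sat τ (.release φ₁ φ₂) := by
  subst h
  simp [LTLf.Sat]

/-- For every LTLf formula φ in NNF over atoms P, every interpretation
w ∈ 2^P and every finite (possibly empty) trace τ, the trace w·τ satisfies φ iff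
τ satisfies prog(φ, w). -/
theorem ltlf_prog_one_step {P : Type} (φ : LTLf P) (w : Set P) (τ : List (Set P)) :
    LTLf.Sat (w :: τ) φ ↔ LTLf.Sat τ (φ.prog w) := by
  induction φ with
  | tt => simp [LTLf.Sat, LTLf.prog]
  | ff => simp [LTLf.Sat, LTLf.prog]
  | atom p => by_cases h : p ∈ w <;> simp [LTLf.Sat, LTLf.prog, h]
  | natom p => by_cases h : p ∈ w <;> simp [LTLf.Sat, LTLf.prog, h]
  | conj φ₁ φ₂ ih₁ ih₂ => rw [LTLf.prog, LTLf.Sat, LTLf.Sat, ih₁, ih₂]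
  | disj φ₁ φ₂ ih₁ ih₂ => rw [LTLf.prog, LTLf.Sat, LTLf.Sat, ih₁, ih₂]
  | next φ => rw [LTLf.prog, LTLf.Sat, LTLf.Sat, LTLf.sat_tt_untl_tt, and_comm]
  | wnext φ => rw [LTLf.prog, LTLf.Sat, LTLf.Sat, LTLf.sat_ff_release_ff, or_comm]
  | untl φ₁ φ₂ ih₁ ih₂ =>
    rw [LTLf.prog, LTLf.Sat, LTLf.Sat, LTLf.Sat, LTLf.Sat, LTLf.sat_tt_untl_tt, ih₁, ih₂,
      and_iff_left_of_imp LTLf.ne_nil_of_sat_untl]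
  | release φ₁ φ₂ ih₁ ih₂ =>
    rw [LTLf.prog, LTLf.Sat, LTLf.Sat, LTLf.Sat, LTLf.Sat, LTLf.sat_ff_release_ff, ih₁, ih₂,
      or_iff_left_of_imp LTLf.sat_release_of_eq_nil]
end

section
/- For every LTLf formula φ in negation normal form over a set of atoms P, every finite trace h ∈ (2^P)^*, and every finite, possibly empty trace τ ∈ (2^P)^*, the concatenation h·τ satisfies φ if and only if τ satisfies prog(φ, h). -/
namespace LTLf

variable {P : Type}

theorem sat_untl_tt_tt (τ : List (Set P)) : Sat τ (.untl .tt .tt) ↔ τ ≠ [] := by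
  cases τ <;> simp [Sat]

theorem sat_release_ff_ff (τ : List (Set P)) : Sat τ (.release .ff .ff) ↔ τ = [] := by
  cases τ <;> simp [Sat]

theorem Sat.ne_nil_of_untl {τ : List (Set P)} {φ₁ φ₂ : LTLf P}
    (h : Sat τ (.untl φ₁ φ₂)) : τ ≠ [] := by
  rintro rfl
  simp [Sat] at h

theorem sat_release_nil (φ₁ φ₂ : LTLf P) : Sat [] (.release φ₁ φ₂) := by
  simp [Sat]

theorem sat_cons_iff_sat_prog (φ : LTLf P) (w : Set P) (τ : List (Set P)) :
    Sat (w :: τ) φ ↔ Sat τ (φ.prog w) := by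
  induction φ with
  | tt | ff => simp [Sat, prog]
  | atom p | natom p => by_cases hp : p ∈ w <;> simp [Sat, prog, hp]
  | conj φ₁ φ₂ ih₁ ih₂ | disj φ₁ φ₂ ih₁ ih₂ => simp [Sat, prog, ih₁, ih₂]
  | next φ => simp [Sat, prog, sat_untl_tt_tt, and_comm]
  | wnext φ => simp [Sat, prog, sat_release_ff_ff, or_comm]
  | untl φ₁ φ₂ ih₁ ih₂ =>
    have := Sat.ne_nil_of_untl (τ := τ) (φ₁ := φ₁) (φ₂ := φ₂)
    simp only [Sat, prog, ih₁, ih₂, sat_untl_tt_tt]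
    tauto
  | release φ₁ φ₂ ih₁ ih₂ =>
    have : τ = [] → Sat τ (.release φ₁ φ₂) := by
      rintro rfl
      exact sat_release_nil φ₁ φ₂
    simp only [Sat, prog, ih₁, ih₂, sat_release_ff_ff]
    tauto

end LTLf

/-- For every LTLf formula φ in NNF over atoms P, every finite trace h and
every finite (possibly empty) trace τ, the concatenation h·τ satisfies φ iff τ satisfies
prog(φ, h). -/
theorem ltlf_prog_trace {P : Type} (φ : LTLf P) (h τ : List (Set P)) :
    LTLf.Sat (h ++ τ) φ ↔ LTLf.Sat τ (φ.progTrace h) := by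
  induction h generalizing φ with
  | nil => rfl
  | cons w h ih => exact (φ.sat_cons_iff_sat_prog w (h ++ τ)).trans (ih (φ.prog w))
end

section
/- Let φ_org and φ_new be LTLf formulas in negation normal form over a set of atoms P, and let A_org and A_new be DFAs over the alphabet 2^P whose accepted words are exactly the finite, possibly empty traces satisfying φ_org and φ_new, respectively. Then for every finite trace h ∈ (2^P)^*, the product DFA (A_org)_h × A_new, where (A_org)_h is the DFA progression of A_org through h, accepts exactly the finite, possibly empty traces satisfying prog(φ_org, h) ∧ φ_new. -/
/-- The DFA progression of `A` through the word `h`: same DFA, but with start state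
progressed to the state that `A` reaches from its start state on reading `h`. -/
def DFA.progress {α σ : Type*} (A : DFA α σ) (h : List α) : DFA α σ where
  step := A.step
  start := A.evalFrom A.start h
  accept := A.accept

/-- The product of two DFAs over a common alphabet: pairs of states, componentwise
transitions, pairs of accepting states. -/
def DFA.product {α σ₁ σ₂ : Type*} (A₁ : DFA α σ₁) (A₂ : DFA α σ₂) : DFA α (σ₁ × σ₂) where
  step := fun s a => (A₁.step s.1 a, A₂.step s.2 a)
  start := (A₁.start, A₂.start)
  accept := {s | s.1 ∈ A₁.accept ∧ s.2 ∈ A₂.accept}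

namespace LTLf

variable {P : Type}

theorem sat_conj (τ : List (Set P)) (φ ψ : LTLf P) :
    Sat τ (.conj φ ψ) ↔ Sat τ φ ∧ Sat τ ψ := by
  cases τ <;> simp [Sat]

theorem sat_disj (τ : List (Set P)) (φ ψ : LTLf P) :
    Sat τ (.disj φ ψ) ↔ Sat τ φ ∨ Sat τ ψ := by
  cases τ <;> simp [Sat]

theorem not_sat_nil_untl (φ ψ : LTLf P) : ¬ Sat [] (.untl φ ψ) := by
  simp [Sat]

theorem sat_nil_release (φ ψ : LTLf P) : Sat [] (.release φ ψ) := by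
  simp [Sat]

theorem sat_prog (φ : LTLf P) (w : Set P) (τ : List (Set P)) :
    Sat τ (φ.prog w) ↔ Sat (w :: τ) φ := by
  induction φ with
  | tt => simp [prog, Sat]
  | ff => simp [prog, Sat]
  | atom p => by_cases hp : p ∈ w <;> simp [prog, Sat, hp]
  | natom p => by_cases hp : p ∈ w <;> simp [prog, Sat, hp]
  | conj φ ψ ihφ ihψ => simp only [prog, sat_conj, ihφ, ihψ]
  | disj φ ψ ihφ ihψ => simp only [prog, sat_disj, ihφ, ihψ]
  | next φ => simp only [prog, sat_conj, sat_untl_tt_tt, Sat, and_comm]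
  | wnext φ => simp only [prog, sat_disj, sat_release_ff_ff, Sat, or_comm]
  | untl φ ψ ihφ ihψ =>
    have hne : Sat τ (.untl φ ψ) → τ ≠ [] := by
      rintro hτ rfl
      exact not_sat_nil_untl φ ψ hτ
    rw [Sat]
    simp only [prog, sat_disj, sat_conj, sat_untl_tt_tt, ihφ, ihψ, and_iff_left_of_imp hne]
  | release φ ψ ihφ ihψ =>
    have hnil : τ = [] → Sat τ (.release φ ψ) := by
      rintro rfl
      exact sat_nil_release φ ψ
    rw [Sat]
    simp only [prog, sat_disj, sat_conj, sat_release_ff_ff, ihφ, ihψ, or_iff_left_of_imp hnil]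

theorem sat_progTrace (φ : LTLf P) (h τ : List (Set P)) :
    Sat τ (φ.progTrace h) ↔ Sat (h ++ τ) φ := by
  induction h generalizing φ with
  | nil => rfl
  | cons w h ih => exact (ih (φ.prog w)).trans (sat_prog φ w (h ++ τ))

end LTLf

namespace DFA

variable {α σ σ₁ σ₂ : Type*}

theorem mem_accepts_progress (A : DFA α σ) (h x : List α) :
    x ∈ (A.progress h).accepts ↔ h ++ x ∈ A.accepts := by
  rw [mem_accepts, mem_accepts, eval, eval, evalFrom_of_append]
  rfl

theorem evalFrom_product (A₁ : DFA α σ₁) (A₂ : DFA α σ₂) (s : σ₁ × σ₂) (x : List α) :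
    (A₁.product A₂).evalFrom s x = (A₁.evalFrom s.1 x, A₂.evalFrom s.2 x) := by
  induction x generalizing s with
  | nil => rfl
  | cons a x ih => exact ih _

theorem mem_accepts_product (A₁ : DFA α σ₁) (A₂ : DFA α σ₂) (x : List α) :
    x ∈ (A₁.product A₂).accepts ↔ x ∈ A₁.accepts ∧ x ∈ A₂.accepts := by
  rw [mem_accepts, eval, evalFrom_product]
  rfl

end DFA

/-- If A_org and A_new accept exactly the finite (possibly empty) traces
satisfying φ_org and φ_new respectively, then for every finite trace h the product DFA
(A_org)_h × A_new accepts exactly the finite (possibly empty) traces satisfying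
prog(φ_org, h) ∧ φ_new. -/
theorem dfa_progress_product_accepts_prog_conj {P : Type} {S₁ S₂ : Type}
    (φorg φnew : LTLf P) (Aorg : DFA (Set P) S₁) (Anew : DFA (Set P) S₂)
    (horg : ∀ τ : List (Set P), τ ∈ Aorg.accepts ↔ LTLf.Sat τ φorg)
    (hnew : ∀ τ : List (Set P), τ ∈ Anew.accepts ↔ LTLf.Sat τ φnew)
    (h : List (Set P)) :
    ∀ τ : List (Set P), τ ∈ ((Aorg.progress h).product Anew).accepts ↔
      LTLf.Sat τ (LTLf.conj (φorg.progTrace h) φnew) := by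
  intro τ
  rw [DFA.mem_accepts_product, DFA.mem_accepts_progress, horg, hnew, LTLf.sat_conj,
    LTLf.sat_progTrace]
end

section
/- Let G be a DFA game over disjoint finite atom sets Y and X with finite state set S, transition δ and accepting set F, and let s ∈ S. There exists a game strategy κ : S → 2^Y that is winning in the game G_s obtained from G by changing the start state to s if and only if s belongs to the winning region W = ⋃_{i∈ℕ} W_i, where W_0 = F and W_{i+1} = W_i ∪ { s' ∈ S | ∃ Y' ⊆ Y, ∀ X' ⊆ X, δ(s', Y'∪X') ∈ W_i }. -/
/-- The joint interpretation over atoms `Y ⊕ X` determined by an agent move `m.1 ⊆ Y`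
and an environment move `m.2 ⊆ X`. -/
def joint {Y X : Type} (m : Set Y × Set X) : Set (Y ⊕ X) :=
  {a | Sum.elim (· ∈ m.1) (· ∈ m.2) a}

/-- The finite trace (over `2^(Y∪X)`) formed by the first `k` joint moves of a play. -/
def jointTrace {Y X : Type} (π : ℕ → Set Y × Set X) (k : ℕ) : List (Set (Y ⊕ X)) :=
  (List.range k).map fun i => joint (π i)

/-- The finite trace corresponding to a history (finite sequence of joint moves). -/
def histTrace {Y X : Type} (h : List (Set Y × Set X)) : List (Set (Y ⊕ X)) :=
  h.map joint

/-- A play is σ-consistent if at every instant the agent move is the one prescribed by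
the strategy σ on the preceding environment moves (in particular `Y_0 = σ(ε)`). -/
def PlayConsistent {Y X : Type} (σ : List (Set X) → Set Y) (π : ℕ → Set Y × Set X) : Prop :=
  ∀ i : ℕ, (π i).1 = σ ((List.range i).map fun j => (π j).2)

/-- A history is σ-consistent if every agent move in it is prescribed by σ on the
preceding environment moves. -/
def HistConsistent {Y X : Type} (σ : List (Set X) → Set Y) (h : List (Set Y × Set X)) : Prop :=
  ∀ (i : ℕ) (hi : i < h.length), (h.get ⟨i, hi⟩).1 = σ ((h.take i).map Prod.snd)
/-- A play is κ-consistent in the DFA game `G` if at every instant the agent move is the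
one prescribed by the game strategy κ on the state that `G` reaches from its start state
on reading the joint trace so far (in particular `Y_0 = κ(ι)`). -/
def GameConsistent {Y X S : Type} (G : DFA (Set (Y ⊕ X)) S) (κ : S → Set Y)
    (π : ℕ → Set Y × Set X) : Prop :=
  ∀ i : ℕ, (π i).1 = κ (G.evalFrom G.start (jointTrace π i))

/-- A game strategy κ is winning in the DFA game `G` if every κ-consistent play has a
finite prefix accepted by `G`. -/
def GameWinning {Y X S : Type} (G : DFA (Set (Y ⊕ X)) S) (κ : S → Set Y) : Prop :=
  ∀ π : ℕ → Set Y × Set X, GameConsistent G κ π →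
    ∃ k : ℕ, G.evalFrom G.start (jointTrace π k) ∈ G.accept

/-- The fixpoint approximants of the winning region: W₀ = F and
W_{i+1} = W_i ∪ { s | ∃ Y' ⊆ Y, ∀ X' ⊆ X, δ(s, Y'∪X') ∈ W_i }. -/
def WinApprox {Y X S : Type} (G : DFA (Set (Y ⊕ X)) S) : ℕ → Set S
  | 0 => G.accept
  | i + 1 => WinApprox G i ∪
      {s | ∃ A : Set Y, ∀ E : Set X, G.step s (joint (A, E)) ∈ WinApprox G i}

/-- The state of the DFA game `G` reached from state `s` against the environment move
sequence `e` when the agent plays according to the game strategy κ. -/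
def inducedState {Y X S : Type} (G : DFA (Set (Y ⊕ X)) S) (κ : S → Set Y) :
    S → List (Set X) → S
  | s, [] => s
  | s, x :: e => inducedState G κ (G.step s (joint (κ s, x))) e

/-- The agent strategy induced by the game strategy κ on the DFA game `G`:
σ(ε) = κ(ι) and σ(X₀⋯Xₙ) = κ(δ(ι, (Y₀∪X₀)⋯(Yₙ∪Xₙ))) with the agent moves Yᵢ
themselves determined recursively by the strategy. -/
def inducedStrategy {Y X S : Type} (G : DFA (Set (Y ⊕ X)) S) (κ : S → Set Y)
    (e : List (Set X)) : Set Y :=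
  κ (inducedState G κ G.start e)

theorem jointTrace_succ {Y X : Type} (π : ℕ → Set Y × Set X) (k : ℕ) :
    jointTrace π (k + 1) = jointTrace π k ++ [joint (π k)] := by
  simp [jointTrace, List.range_succ]

theorem evalFrom_jointTrace_succ {Y X S : Type} (G : DFA (Set (Y ⊕ X)) S) (s : S)
    (π : ℕ → Set Y × Set X) (k : ℕ) :
    G.evalFrom s (jointTrace π (k + 1)) =
      G.step (G.evalFrom s (jointTrace π k)) (joint (π k)) := by
  rw [jointTrace_succ, DFA.evalFrom_append_singleton]

theorem monotone_winApprox {Y X S : Type} (G : DFA (Set (Y ⊕ X)) S) :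
    Monotone (WinApprox G) :=
  monotone_nat_of_le_succ fun _ => Set.subset_union_left

/-- The winning region is closed under controllable predecessors, because the environment
has only finitely many moves. -/
theorem mem_iUnion_winApprox_of_forall_step {Y X S : Type} [Finite X]
    (G : DFA (Set (Y ⊕ X)) S) {s : S} (A : Set Y)
    (h : ∀ E : Set X, G.step s (joint (A, E)) ∈ ⋃ i : ℕ, WinApprox G i) :
    s ∈ ⋃ i : ℕ, WinApprox G i := by
  simp only [Set.mem_iUnion] at h ⊢
  choose f hf using h
  obtain ⟨N, hN⟩ := (Set.finite_range f).bddAbove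
  exact ⟨N + 1, Or.inr ⟨A, fun E => monotone_winApprox G (hN ⟨E, rfl⟩) (hf E)⟩⟩

/-- There is a single game strategy that strictly decreases the rank of every state in the
winning region that is not accepting. -/
theorem exists_rank_decreasing_strategy {Y X S : Type} (G : DFA (Set (Y ⊕ X)) S) :
    ∃ κ : S → Set Y, ∀ (i : ℕ) (s : S), s ∈ WinApprox G (i + 1) → s ∉ WinApprox G i →
      ∀ E : Set X, G.step s (joint (κ s, E)) ∈ WinApprox G i := by
  have key : ∀ s : S, ∃ A : Set Y, ∀ i : ℕ, s ∈ WinApprox G (i + 1) → s ∉ WinApprox G i →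
      ∀ E : Set X, G.step s (joint (A, E)) ∈ WinApprox G i := by
    intro s
    by_cases h : ∃ i, s ∈ WinApprox G (i + 1) ∧ s ∉ WinApprox G i
    · obtain ⟨i, hi, hni⟩ := h
      obtain ⟨A, hA⟩ := hi.resolve_left hni
      refine ⟨A, fun j hj hnj => ?_⟩
      have hij : i = j := by
        rcases lt_trichotomy i j with hlt | heq | hlt
        · exact absurd (monotone_winApprox G hlt hi) hnj
        · exact heq
        · exact absurd (monotone_winApprox G hlt hj) hni
      exact hij ▸ hA
    · exact ⟨∅, fun i hi hni => absurd ⟨i, hi, hni⟩ h⟩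
  choose κ hκ using key
  exact ⟨κ, fun i s => hκ s i⟩

/-- A strategy is not winning if the environment can always stay inside a set of
non-accepting states containing the start state. -/
theorem not_gameWinning_of_trap {Y X S : Type} (G : DFA (Set (Y ⊕ X)) S) (κ : S → Set Y)
    (T : Set S) (hstart : G.start ∈ T) (hT : ∀ t ∈ T, t ∉ G.accept)
    (hstep : ∀ t ∈ T, ∃ E : Set X, G.step t (joint (κ t, E)) ∈ T) :
    ¬ GameWinning G κ := by
  intro hwin
  choose! e he using hstep
  let q : ℕ → S := fun n => Nat.rec G.start (fun _ t => G.step t (joint (κ t, e t))) n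
  let π : ℕ → Set Y × Set X := fun n => (κ (q n), e (q n))
  have hq : ∀ n, G.evalFrom G.start (jointTrace π n) = q n := by
    intro n
    induction n with
    | zero => rfl
    | succ n ih => rw [evalFrom_jointTrace_succ, ih]
  have hqT : ∀ n, q n ∈ T := by
    intro n
    induction n with
    | zero => exact hstart
    | succ n ih => exact he _ ih
  obtain ⟨k, hk⟩ := hwin π fun i => by rw [hq]
  rw [hq] at hk
  exact hT _ (hqT k) hk

/-- A strategy that decreases the rank wins from every state of the winning region. -/
theorem gameWinning_of_rank_decreasing {Y X S : Type} (G : DFA (Set (Y ⊕ X)) S)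
    (κ : S → Set Y)
    (hκ : ∀ (i : ℕ) (s : S), s ∈ WinApprox G (i + 1) → s ∉ WinApprox G i →
      ∀ E : Set X, G.step s (joint (κ s, E)) ∈ WinApprox G i)
    {i : ℕ} (hi : G.start ∈ WinApprox G i) : GameWinning G κ := by
  intro π hπ
  have key : ∀ i n, G.evalFrom G.start (jointTrace π n) ∈ WinApprox G i →
      ∃ k : ℕ, G.evalFrom G.start (jointTrace π k) ∈ G.accept := by
    intro i
    induction i with
    | zero => exact fun n hn => ⟨n, hn⟩
    | succ i ih =>
      intro n hn
      by_cases hni : G.evalFrom G.start (jointTrace π n) ∈ WinApprox G i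
      · exact ih n hni
      · refine ih (n + 1) ?_
        have hmem := hκ i _ hn hni (π n).2
        rwa [← hπ n, Prod.mk.eta, ← evalFrom_jointTrace_succ] at hmem
  exact key i 0 hi

theorem winApprox_congr_start {Y X S : Type} (G : DFA (Set (Y ⊕ X)) S) (s : S) :
    WinApprox { G with start := s } = WinApprox G := by
  funext i
  induction i with
  | zero => rfl
  | succ i ih => simp only [WinApprox, ih]

/-- There is a game strategy winning in the game G_s (G with start state
changed to s) iff s belongs to the winning region ⋃ᵢ Wᵢ. -/
theorem game_winning_iff_mem_winning_region {Y X S : Type}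
    [Fintype Y] [Fintype X] [Fintype S]
    (G : DFA (Set (Y ⊕ X)) S) (s : S) :
    (∃ κ : S → Set Y, GameWinning { G with start := s } κ) ↔ s ∈ ⋃ i : ℕ, WinApprox G i := by
  constructor
  · rintro ⟨κ, hκ⟩
    by_contra hs
    refine not_gameWinning_of_trap { G with start := s } κ (⋃ i : ℕ, WinApprox G i)ᶜ hs
      (fun t ht hacc => ht (Set.mem_iUnion.2 ⟨0, hacc⟩)) (fun t ht => ?_) hκ
    by_contra! h
    exact ht (mem_iUnion_winApprox_of_forall_step G (κ t) fun E => not_not.1 (h E))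
  · intro hs
    obtain ⟨i, hi⟩ := Set.mem_iUnion.1 hs
    rw [← winApprox_congr_start G s] at hi
    obtain ⟨κ, hκ⟩ := exists_rank_decreasing_strategy { G with start := s }
    exact ⟨κ, gameWinning_of_rank_decreasing _ κ hκ hi⟩
end

section
/- Let G be a DFA game over disjoint finite atom sets Y and X and let κ be a game strategy that is winning in G. Then the induced agent strategy σ_(G,κ) has the property that every σ_(G,κ)-consistent play has a finite prefix accepted by G. In particular, if the words accepted by G are exactly the finite, possibly empty traces satisfying an LTLf formula φ over Y ∪ X, then σ_(G,κ) is a winning strategy for φ. -/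
/-- A strategy σ is winning for the LTLf formula φ over atoms Y ∪ X if every
σ-consistent play has a finite, possibly empty, prefix satisfying φ. -/
def WinningFor {Y X : Type} (σ : List (Set X) → Set Y) (φ : LTLf (Y ⊕ X)) : Prop :=
  ∀ π : ℕ → Set Y × Set X, PlayConsistent σ π → ∃ k : ℕ, LTLf.Sat (jointTrace π k) φ

/-- A strategy σ is winning for φ assuming the history h if for every σ-consistent play τ
the concatenation h·τ has a finite, possibly empty, prefix (extending h) satisfying φ. -/
def WinningAssuming {Y X : Type} (σ : List (Set X) → Set Y) (φ : LTLf (Y ⊕ X))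
    (h : List (Set Y × Set X)) : Prop :=
  ∀ π : ℕ → Set Y × Set X, PlayConsistent σ π →
    ∃ k : ℕ, LTLf.Sat (histTrace h ++ jointTrace π k) φ

/-- A strategy σ solves incremental synthesis for (φ_org, h, φ_new) if every σ-consistent
play has a finite, possibly empty, prefix ρ such that h·ρ satisfies φ_org and ρ
satisfies φ_new. -/
def SolvesIncremental {Y X : Type} (σ : List (Set X) → Set Y) (φorg : LTLf (Y ⊕ X))
    (h : List (Set Y × Set X)) (φnew : LTLf (Y ⊕ X)) : Prop :=
  ∀ π : ℕ → Set Y × Set X, PlayConsistent σ π →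
    ∃ k : ℕ, LTLf.Sat (histTrace h ++ jointTrace π k) φorg ∧ LTLf.Sat (jointTrace π k) φnew
theorem inducedState_append_singleton {Y X S : Type} (G : DFA (Set (Y ⊕ X)) S) (κ : S → Set Y)
    (s : S) (e : List (Set X)) (x : Set X) :
    inducedState G κ s (e ++ [x]) =
      G.step (inducedState G κ s e) (joint (κ (inducedState G κ s e), x)) := by
  induction e generalizing s with
  | nil => rfl
  | cons y e ih => exact ih _

/-- Along a play consistent with the induced strategy, the recursively computed state is the
state reached by the automaton on the joint trace. -/
theorem PlayConsistent.inducedState_eq_evalFrom {Y X S : Type} {G : DFA (Set (Y ⊕ X)) S}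
    {κ : S → Set Y} {π : ℕ → Set Y × Set X} (hπ : PlayConsistent (inducedStrategy G κ) π)
    (k : ℕ) :
    inducedState G κ G.start ((List.range k).map fun j => (π j).2) =
      G.evalFrom G.start (jointTrace π k) := by
  induction k with
  | zero => rfl
  | succ k ih =>
    have hmove : κ (G.evalFrom G.start (jointTrace π k)) = (π k).1 := by
      rw [← ih]
      exact (hπ k).symm
    have htrace : jointTrace π (k + 1) = jointTrace π k ++ [joint (π k)] := by
      simp [jointTrace, List.range_succ]
    rw [List.range_succ, List.map_append, List.map_singleton, inducedState_append_singleton, ih,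
      hmove, htrace, DFA.evalFrom_append_singleton]

theorem PlayConsistent.gameConsistent {Y X S : Type} {G : DFA (Set (Y ⊕ X)) S}
    {κ : S → Set Y} {π : ℕ → Set Y × Set X} (hπ : PlayConsistent (inducedStrategy G κ) π) :
    GameConsistent G κ π := fun i => by
  rw [← hπ.inducedState_eq_evalFrom i]
  exact hπ i

/-- If κ is a winning game strategy in the DFA game G, then every play
consistent with the induced agent strategy σ_(G,κ) has a finite prefix accepted by G;
in particular, if the words accepted by G are exactly the finite, possibly empty, traces
satisfying an LTLf formula φ over Y ∪ X, then σ_(G,κ) is winning for φ. -/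
theorem induced_strategy_winning {Y X S : Type}
    (G : DFA (Set (Y ⊕ X)) S) (κ : S → Set Y) (hκ : GameWinning G κ) :
    (∀ π : ℕ → Set Y × Set X, PlayConsistent (inducedStrategy G κ) π →
        ∃ k : ℕ, G.evalFrom G.start (jointTrace π k) ∈ G.accept) ∧
      ∀ φ : LTLf (Y ⊕ X), (∀ τ : List (Set (Y ⊕ X)), τ ∈ G.accepts ↔ LTLf.Sat τ φ) →
        WinningFor (inducedStrategy G κ) φ := by
  have hacc : ∀ π : ℕ → Set Y × Set X, PlayConsistent (inducedStrategy G κ) π →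
      ∃ k : ℕ, G.evalFrom G.start (jointTrace π k) ∈ G.accept :=
    fun π hπ => hκ π hπ.gameConsistent
  refine ⟨hacc, fun φ hφ π hπ => ?_⟩
  obtain ⟨k, hk⟩ := hacc π hπ
  exact ⟨k, (hφ _).1 hk⟩
end

section
/- For every LTLf formula φ in negation normal form over a finite set of atoms P, there exists a DFA over the alphabet 2^P with at most 2^(2^n) states, where n is the number of subformulas of φ, whose accepted words are exactly the finite, possibly empty traces satisfying φ. -/
/-- The set of subformulas of an LTLf formula (nodes of its abstract syntax tree,
counted up to equality of subformulas). -/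
def LTLf.subformulas {P : Type} [DecidableEq P] : LTLf P → Finset (LTLf P)
  | .tt => {LTLf.tt}
  | .ff => {LTLf.ff}
  | .atom p => {LTLf.atom p}
  | .natom p => {LTLf.natom p}
  | .conj a b => insert (LTLf.conj a b) (a.subformulas ∪ b.subformulas)
  | .disj a b => insert (LTLf.disj a b) (a.subformulas ∪ b.subformulas)
  | .next a => insert (LTLf.next a) a.subformulas
  | .wnext a => insert (LTLf.wnext a) a.subformulas
  | .untl a b => insert (LTLf.untl a b) (a.subformulas ∪ b.subformulas)
  | .release a b => insert (LTLf.release a b) (a.subformulas ∪ b.subformulas)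

namespace LTLf

variable {P : Type}

/-- The obligation that a temporal formula passes on to the rest `τ` of the trace after one letter
has been read; formulas without such an obligation of their own get `False`. -/
def Pending (τ : List (Set P)) : LTLf P → Prop
  | .next ψ => τ ≠ [] ∧ Sat τ ψ
  | .wnext ψ => τ = [] ∨ Sat τ ψ
  | .untl ψ₁ ψ₂ => Sat τ (.untl ψ₁ ψ₂)
  | .release ψ₁ ψ₂ => Sat τ (.release ψ₁ ψ₂)
  | _ => False

/-- The language of traces satisfying `φ`. -/
def language (φ : LTLf P) : Language (Set P) := {τ | Sat τ φ}

variable [DecidableEq P]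

theorem mem_subformulas_self (φ : LTLf P) : φ ∈ φ.subformulas := by
  cases φ <;> simp [subformulas]

theorem subformulas_subset {φ ψ : LTLf P} (h : ψ ∈ φ.subformulas) :
    ψ.subformulas ⊆ φ.subformulas := by
  induction φ with
  | tt | ff | atom | natom =>
    simp only [subformulas, Finset.mem_singleton] at h
    rw [h]
  | next a iha | wnext a iha =>
    simp only [subformulas, Finset.mem_insert] at h
    rcases h with rfl | h
    · rfl
    · exact (iha h).trans (Finset.subset_insert _ _)
  | conj a b iha ihb | disj a b iha ihb | untl a b iha ihb | release a b iha ihb =>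
    simp only [subformulas, Finset.mem_insert, Finset.mem_union] at h
    rcases h with rfl | h | h
    · rfl
    · exact (iha h).trans (Finset.subset_union_left.trans (Finset.subset_insert _ _))
    · exact (ihb h).trans (Finset.subset_union_right.trans (Finset.subset_insert _ _))

/-- A leaf of the syntax tree is never pending. -/
theorem exists_mem_subformulas_not_pending (φ : LTLf P) :
    ∃ ψ ∈ φ.subformulas, ∀ τ, ¬ Pending τ ψ := by
  induction φ with
  | tt | ff | atom | natom => exact ⟨_, mem_subformulas_self _, fun _ => id⟩
  | next a iha | wnext a iha =>
    obtain ⟨ψ, hψ, h⟩ := iha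
    exact ⟨ψ, by simp [subformulas, hψ], h⟩
  | conj a b iha _ | disj a b iha _ | untl a b iha _ | release a b iha _ =>
    obtain ⟨ψ, hψ, h⟩ := iha
    exact ⟨ψ, by simp [subformulas, hψ], h⟩

theorem sat_cons_congr {τ τ' : List (Set P)} (w : Set P) {φ : LTLf P}
    (h : ∀ ψ ∈ φ.subformulas, Pending τ ψ ↔ Pending τ' ψ) :
    Sat (w :: τ) φ ↔ Sat (w :: τ') φ := by
  induction φ with
  | tt | ff | atom | natom => simp [Sat]
  | next a _ | wnext a _ =>
    simpa [Sat, Pending] using h _ (mem_subformulas_self _)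
  | conj a b iha ihb | disj a b iha ihb =>
    simp only [Sat]
    rw [iha fun ψ hψ => h ψ (by simp [subformulas, hψ]),
      ihb fun ψ hψ => h ψ (by simp [subformulas, hψ])]
  | untl a b iha ihb | release a b iha ihb =>
    have hself := h _ (mem_subformulas_self _)
    simp only [Pending] at hself
    rw [Sat, Sat, iha fun ψ hψ => h ψ (by simp [subformulas, hψ]),
      ihb fun ψ hψ => h ψ (by simp [subformulas, hψ]), hself]

theorem pending_append_congr {τ τ' : List (Set P)} (u : List (Set P)) {φ : LTLf P}
    (h : ∀ ψ ∈ φ.subformulas, Pending τ ψ ↔ Pending τ' ψ) :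
    ∀ ψ ∈ φ.subformulas, Pending (u ++ τ) ψ ↔ Pending (u ++ τ') ψ := by
  induction u with
  | nil => exact h
  | cons w u ih =>
    intro ψ hψ
    have hsat (χ : LTLf P) (hχ : χ ∈ ψ.subformulas) :
        Sat (w :: (u ++ τ)) χ ↔ Sat (w :: (u ++ τ')) χ :=
      sat_cons_congr w fun ξ hξ => ih ξ (subformulas_subset hψ (subformulas_subset hχ hξ))
    cases ψ with
    | tt | ff | atom | natom | conj | disj => rfl
    | next a | wnext a =>
      simp [Pending, hsat a (by simp [subformulas, mem_subformulas_self])]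
    | untl a b | release a b => exact hsat _ (mem_subformulas_self _)

open Classical in
/-- The subformulas of `φ` that are pending on `τ`. -/
noncomputable def pendingSet (φ : LTLf P) (τ : List (Set P)) : Finset (LTLf P) :=
  φ.subformulas.filter (Pending τ)

theorem sat_append_congr {φ : LTLf P} {u τ τ' : List (Set P)} (hu : u ≠ [])
    (h : φ.pendingSet τ = φ.pendingSet τ') : Sat (u ++ τ) φ ↔ Sat (u ++ τ') φ := by
  cases u with
  | nil => exact absurd rfl hu
  | cons w u =>
    exact sat_cons_congr w (pending_append_congr u (by
      simpa [pendingSet, Finset.filter_inj'] using h))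

/-- The left quotients by nonempty words are unions of fibres of `pendingSet`. -/
theorem exists_finset_range_leftQuotient_subset (φ : LTLf P) :
    ∃ s : Finset (Language (Set P)), Set.range φ.language.leftQuotient ⊆ s ∧
      s.card ≤ 2 ^ 2 ^ (φ.subformulas.card - 1) + 1 := by
  classical
  obtain ⟨ℓ, hℓ, hℓ'⟩ := exists_mem_subformulas_not_pending φ
  let B := (φ.subformulas.erase ℓ).powerset
  have hB (τ) : φ.pendingSet τ ∈ B := by
    rw [Finset.mem_powerset]
    intro ψ hψ
    obtain ⟨h, h'⟩ := Finset.mem_filter.1 hψ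
    exact Finset.mem_erase.2 ⟨fun e => hℓ' τ (e ▸ h'), h⟩
  let F (A : Finset (Finset (LTLf P))) : Language (Set P) := {τ | φ.pendingSet τ ∈ A}
  refine ⟨insert φ.language (B.powerset.image F), ?_, ?_⟩
  · rintro _ ⟨u, rfl⟩
    rw [Finset.mem_coe, Finset.mem_insert, Finset.mem_image]
    by_cases hu : u = []
    · exact Or.inl (by simp [hu])
    · refine Or.inr ⟨B.filter fun T => ∃ τ, φ.pendingSet τ = T ∧ Sat (u ++ τ) φ,
        Finset.mem_powerset.2 (Finset.filter_subset _ _), ?_⟩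
      ext τ
      change φ.pendingSet τ ∈ Finset.filter _ _ ↔ Sat (u ++ τ) φ
      rw [Finset.mem_filter]
      exact ⟨fun ⟨_, _, e, hs⟩ => (sat_append_congr hu e).1 hs, fun hs => ⟨hB τ, τ, rfl, hs⟩⟩
  · refine (Finset.card_insert_le _ _).trans (Nat.add_le_add_right ?_ 1)
    refine Finset.card_image_le.trans_eq ?_
    rw [Finset.card_powerset, Finset.card_powerset, Finset.card_erase_of_mem hℓ]

end LTLf

theorem two_pow_two_pow_add_one_le (m : ℕ) : 2 ^ 2 ^ m + 1 ≤ 2 ^ 2 ^ (m + 1) :=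
  Nat.pow_lt_pow_right one_lt_two (Nat.pow_lt_pow_right one_lt_two m.lt_succ_self)

/-- For every LTLf formula φ in NNF over a finite set of atoms P there is
a DFA over the alphabet 2^P, with at most 2^(2^n) states where n is the number of
subformulas of φ, accepting exactly the finite, possibly empty, traces satisfying φ. -/
theorem exists_dfa_for_ltlf {P : Type} [Fintype P] [DecidableEq P] (φ : LTLf P) :
    ∃ (k : ℕ) (A : DFA (Set P) (Fin k)),
      k ≤ 2 ^ (2 ^ φ.subformulas.card) ∧
        ∀ τ : List (Set P), τ ∈ A.accepts ↔ LTLf.Sat τ φ := by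
  obtain ⟨s, hs, hcard⟩ := φ.exists_finset_range_leftQuotient_subset
  have : Finite (Set.range φ.language.leftQuotient) := s.finite_toSet.subset hs
  refine ⟨_, DFA.reindex (Finite.equivFin _) φ.language.toDFA, ?_, fun τ => ?_⟩
  · have hpos : 0 < φ.subformulas.card := Finset.card_pos.2 ⟨φ, φ.mem_subformulas_self⟩
    calc Nat.card (Set.range φ.language.leftQuotient)
        ≤ s.card := by
          rw [Nat.card_coe_set_eq, ← Set.ncard_coe_finset]
          exact Set.ncard_le_ncard hs s.finite_toSet
      _ ≤ 2 ^ 2 ^ (φ.subformulas.card - 1) + 1 := hcard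
      _ ≤ 2 ^ 2 ^ φ.subformulas.card := by
          simpa [Nat.sub_add_cancel hpos] using
            two_pow_two_pow_add_one_le (φ.subformulas.card - 1)
  · rw [DFA.accepts_reindex, Language.accepts_toDFA]
    rfl
end

section
/- Fix disjoint sets Y (agent atoms) and X (environment atoms). Let φ_org, φ_1, φ_2 be LTLf formulas over atoms Y ∪ X and let h_1, h_2 be histories. For every agent strategy σ: every σ-consistent play τ has a finite, possibly empty prefix ρ such that (h_1·h_2)·ρ satisfies φ_org, h_2·ρ satisfies φ_1, and ρ satisfies φ_2, if and only if σ is winning for the LTLf formula prog(φ_org, h_1·h_2) ∧ prog(φ_1, h_2) ∧ φ_2. -/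
/-- A nonempty trace satisfies a formula iff its tail satisfies the progressed formula. -/
theorem LTLf.sat_prog_iff {P : Type} (φ : LTLf P) (w : Set P) (τ : List (Set P)) :
    LTLf.Sat τ (φ.prog w) ↔ LTLf.Sat (w :: τ) φ := by
  have nonempty_iff : LTLf.Sat τ (.untl .tt .tt) ↔ τ ≠ [] := by
    cases τ <;> simp [LTLf.Sat]
  have empty_iff : LTLf.Sat τ (.release .ff .ff) ↔ τ = [] := by
    cases τ <;> simp [LTLf.Sat]
  induction φ with
  | tt => simp [LTLf.prog, LTLf.Sat]
  | ff => simp [LTLf.prog, LTLf.Sat]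
  | atom p => by_cases h : p ∈ w <;> simp [LTLf.prog, LTLf.Sat, h]
  | natom p => by_cases h : p ∈ w <;> simp [LTLf.prog, LTLf.Sat, h]
  | conj φ₁ φ₂ ih₁ ih₂ => simp only [LTLf.prog, LTLf.Sat, ih₁, ih₂]
  | disj φ₁ φ₂ ih₁ ih₂ => simp only [LTLf.prog, LTLf.Sat, ih₁, ih₂]
  | next φ => simp only [LTLf.prog, LTLf.Sat, nonempty_iff, and_comm]
  | wnext φ => simp only [LTLf.prog, LTLf.Sat, empty_iff, or_comm]
  | untl φ₁ φ₂ ih₁ ih₂ =>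
    have nonempty_of_sat : LTLf.Sat τ (.untl φ₁ φ₂) → τ ≠ [] := by
      rintro h rfl
      simp [LTLf.Sat] at h
    simp only [LTLf.prog, LTLf.Sat, ih₁, ih₂, nonempty_iff]
    tauto
  | release φ₁ φ₂ ih₁ ih₂ =>
    have sat_of_empty : τ = [] → LTLf.Sat τ (.release φ₁ φ₂) := by
      rintro rfl
      simp [LTLf.Sat]
    simp only [LTLf.prog, LTLf.Sat, ih₁, ih₂, empty_iff]
    tauto

/-- Progressing a formula through a finite trace `h` yields a formula satisfied by exactly
the continuations of `h` that satisfy the original one. -/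
theorem LTLf.sat_progTrace_iff {P : Type} (φ : LTLf P) (h τ : List (Set P)) :
    LTLf.Sat τ (φ.progTrace h) ↔ LTLf.Sat (h ++ τ) φ := by
  induction h generalizing φ with
  | nil => rfl
  | cons w h ih => exact (ih (φ.prog w)).trans (φ.sat_prog_iff w (h ++ τ))

/-- Every σ-consistent play has a finite, possibly empty, prefix ρ with
(h₁·h₂)·ρ ⊨ φ_org, h₂·ρ ⊨ φ₁ and ρ ⊨ φ₂, iff σ is winning for the LTLf formula
prog(φ_org, h₁·h₂) ∧ prog(φ₁, h₂) ∧ φ₂. -/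
theorem incremental_two_goals_iff_winning_prog {Y X : Type}
    (φorg φ₁ φ₂ : LTLf (Y ⊕ X)) (h₁ h₂ : List (Set Y × Set X))
    (σ : List (Set X) → Set Y) :
    (∀ π : ℕ → Set Y × Set X, PlayConsistent σ π →
        ∃ k : ℕ, LTLf.Sat (histTrace (h₁ ++ h₂) ++ jointTrace π k) φorg ∧
          LTLf.Sat (histTrace h₂ ++ jointTrace π k) φ₁ ∧
          LTLf.Sat (jointTrace π k) φ₂) ↔
      WinningFor σ (LTLf.conj (φorg.progTrace (histTrace (h₁ ++ h₂)))
        (LTLf.conj (φ₁.progTrace (histTrace h₂)) φ₂)) := by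
  simp only [WinningFor, LTLf.Sat, LTLf.sat_progTrace_iff]
end
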